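/- arXiv:1205.4889 — 3 statements merged into one kernel-verified Lean document; each statement's English description precedes it below -/
import Mathlib

section
/- Every quantitative multiplayer reachability game has a finite-memory Nash equilibrium. -/
/-- A quantitative multiplayer reachability game: a finite directed graph whose
vertex set is partitioned among the players (via `owner`), with an initial vertex `v0`,
an edge relation `E` such that every vertex has an outgoing edge, and a goal set
`goal i` for each player `i`. -/
structure ReachGame (P : Type) (V : Type) where
  owner : V → P
  v0 : V
  E : V → V → Prop
  total : ∀ v : V, ∃ w : V, E v w
  goal : P → Set V

namespace ReachGame

variable {P V : Type} [DecidableEq P] (G : ReachGame P V)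

/-- The last vertex of a history (with default `v0`). -/
def lastV (h : List V) : V := h.getLastD G.v0

/-- A history: a nonempty finite path in the graph starting at `v0`. -/
def IsHistory (h : List V) : Prop :=
  h ≠ [] ∧ h.head? = some G.v0 ∧ List.Chain' G.E h

/-- A play: an infinite path starting at `v0`. -/
def IsPlay (ρ : ℕ → V) : Prop :=
  ρ 0 = G.v0 ∧ ∀ k : ℕ, G.E (ρ k) (ρ (k + 1))

/-- `σ` is a (total encoding of a) strategy of player `i`: on every history ending in
a vertex owned by `i` it chooses a successor along an edge. -/
def IsStrategy (i : P) (σ : List V → V) : Prop :=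
  ∀ h : List V, G.IsHistory h → G.owner (G.lastV h) = i → G.E (G.lastV h) (σ h)

/-- A strategy profile: one strategy per player. -/
def IsProfile (prof : P → List V → V) : Prop :=
  ∀ i : P, G.IsStrategy i (prof i)

/-- The history of length `n` (i.e. with `n` edges) obtained by letting the players
follow the profile `prof` from `v0`. -/
def outHist (prof : P → List V → V) : ℕ → List V
  | 0 => [G.v0]
  | n + 1 => outHist prof n ++ [prof (G.owner (G.lastV (outHist prof n))) (outHist prof n)]

/-- The outcome play of the strategy profile `prof`. -/
def outcome (prof : P → List V → V) (n : ℕ) : V :=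
  G.lastV (G.outHist prof n)

/-- The cost of player `i` for the play `ρ`: the least `l` with `ρ l ∈ goal i`,
and `⊤` (`+∞`) if there is no such `l`. -/
noncomputable def cost (i : P) (ρ : ℕ → V) : ℕ∞ :=
  sInf {n : ℕ∞ | ∃ l : ℕ, n = (l : ℕ∞) ∧ ρ l ∈ G.goal i}

/-- Nash equilibrium: no player can strictly decrease his cost by a unilateral
deviation. -/
def IsNash (prof : P → List V → V) : Prop :=
  ∀ (j : P) (σ' : List V → V), G.IsStrategy j σ' →
    G.cost j (G.outcome prof) ≤ G.cost j (G.outcome (Function.update prof j σ'))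

/-- `h ≈_σ h'` : the strategy `σ` of player `i` behaves the same after `h` and `h'`,
i.e. `σ (h ++ δ) = σ (h' ++ δ)` for every suffix `δ` making both `h ++ δ` and
`h' ++ δ` histories ending in a vertex of player `i`. -/
def MemEq (i : P) (σ : List V → V) (h h' : List V) : Prop :=
  ∀ δ : List V,
    G.IsHistory (h ++ δ) → G.owner (G.lastV (h ++ δ)) = i →
    G.IsHistory (h' ++ δ) → G.owner (G.lastV (h' ++ δ)) = i →
    σ (h ++ δ) = σ (h' ++ δ)

/-- A strategy of player `i` is finite-memory if the relation `≈_σ` has finitely many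
equivalence classes on histories, i.e. there is a finite set of histories meeting
every class. -/
def FiniteMemory (i : P) (σ : List V → V) : Prop :=
  ∃ S : Finset (List V), ∀ h : List V, G.IsHistory h →
    ∃ h' ∈ S, G.IsHistory h' ∧ G.MemEq i σ h h'

/-- A profile is finite-memory if each of its strategies is. -/
def FiniteMemoryProfile (prof : P → List V → V) : Prop :=
  ∀ i : P, G.FiniteMemory i (prof i)

/-- `Visit h`: the set of players whose goal set is visited by the finite path `h`. -/
def visitL (h : List V) : Set P := {i : P | ∃ v ∈ h, v ∈ G.goal i}

/-- The type of a strategy profile: the set of players whose goal set is visited by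
the outcome. -/
def typeOf (prof : P → List V → V) : Set P :=
  {i : P | ∃ l : ℕ, G.outcome prof l ∈ G.goal i}

/-! ### The truncated game `G^d` -/

/-- A strategy of player `i` in the truncated game `G^d` : it chooses a successor on
every history with less than `d` edges (list length `≤ d`) ending in a vertex of `i`. -/
def IsStrategyTrunc (d : ℕ) (i : P) (σ : List V → V) : Prop :=
  ∀ h : List V, G.IsHistory h → h.length ≤ d → G.owner (G.lastV h) = i →
    G.E (G.lastV h) (σ h)

/-- A strategy profile of the truncated game `G^d`. -/
def IsProfileTrunc (d : ℕ) (prof : P → List V → V) : Prop :=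
  ∀ i : P, G.IsStrategyTrunc d i (prof i)

/-- The cost of player `i` for a finite play `h` (a list of vertices): the least
position of `h` lying in `goal i`, and `⊤` if `goal i` is not visited. -/
noncomputable def costList (i : P) (h : List V) : ℕ∞ :=
  sInf {n : ℕ∞ | ∃ l : ℕ, n = (l : ℕ∞) ∧ l < h.length ∧ h.getD l G.v0 ∈ G.goal i}

/-- Nash equilibrium of the truncated game `G^d` (whose plays are the histories with
exactly `d` edges). -/
def IsNashTrunc (d : ℕ) (prof : P → List V → V) : Prop :=
  ∀ (j : P) (σ' : List V → V), G.IsStrategyTrunc d j σ' →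
    G.costList j (G.outHist prof d) ≤
      G.costList j (G.outHist (Function.update prof j σ') d)

/-- The type of a strategy profile of the truncated game `G^d`. -/
def typeOfTrunc (d : ℕ) (prof : P → List V → V) : Set P :=
  G.visitL (G.outHist prof d)

end ReachGame

namespace ReachGame

section Aux

variable {P V : Type} [DecidableEq P] (G : ReachGame P V)

/-- The Bellman equation for player `j` against the coalition has a solution. -/
theorem exists_bellman [Fintype V] (j : P) : ∃ f : V → ℕ∞,
    (∀ v, v ∈ G.goal j → f v = 0) ∧
    (∀ v, G.owner v = j → ∃ w, G.E v w ∧ (v ∉ G.goal j → f w + 1 ≤ f v)) ∧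
    (∀ v w, G.owner v = j → G.E v w → f v ≤ f w + 1) ∧
    (∀ v w, v ∉ G.goal j → G.owner v ≠ j → G.E v w → f w + 1 ≤ f v) ∧
    (∀ v, G.owner v ≠ j → ∃ w, G.E v w ∧ f v ≤ f w + 1) := by
  classical
  let F : (V → ℕ∞) →o (V → ℕ∞) :=
    { toFun := fun f v => if v ∈ G.goal j then 0 else
        if G.owner v = j then (⨅ w : {w // G.E v w}, f w) + 1
        else (⨆ w : {w // G.E v w}, f w) + 1
      monotone' := by
        intro f g hfg v
        dsimp only
        split_ifs
        · exact le_rfl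
        · gcongr; exact hfg _
        · gcongr; exact hfg _ }
  have hF : F F.lfp = F.lfp := F.map_lfp
  set f := F.lfp with hf
  have hv : ∀ v, f v = if v ∈ G.goal j then 0 else
        if G.owner v = j then (⨅ w : {w // G.E v w}, f w) + 1
        else (⨆ w : {w // G.E v w}, f w) + 1 := fun v => (congrFun hF v).symm
  have hne : ∀ v, Nonempty {w // G.E v w} := fun v => by
    obtain ⟨w, hw⟩ := G.total v; exact ⟨⟨w, hw⟩⟩
  refine ⟨f, ?_, ?_, ?_, ?_, ?_⟩
  · intro v h; rw [hv, if_pos h]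
  · intro v h
    have := hne v
    obtain ⟨w, hw⟩ := exists_eq_ciInf_of_finite (f := fun w : {w // G.E v w} => f w)
    refine ⟨w, w.2, fun hg => ?_⟩
    rw [hv v, if_neg hg, if_pos h, ← hw]
  · intro v w h hE
    rw [hv v]
    split_ifs
    · exact zero_le
    · gcongr
      exact iInf_le (fun w : {w // G.E v w} => f w) ⟨w, hE⟩
  · intro v w hg h hE
    rw [hv v, if_neg hg, if_neg h]
    gcongr
    exact le_iSup (fun w : {w // G.E v w} => f w) ⟨w, hE⟩
  · intro v h
    have := hne v
    obtain ⟨w, hw⟩ := exists_eq_ciSup_of_finite (f := fun w : {w // G.E v w} => f w)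
    refine ⟨w, w.2, ?_⟩
    rw [hv v, if_neg h, ← hw]
    split_ifs
    · exact zero_le
    · exact le_rfl

open Classical in
/-- Memory update: remember the first player deviating from `τ`, and the current vertex. -/
noncomputable def memStep (τ : V → V) (s : Option P × V) (w : V) : Option P × V :=
  (match s.1 with
    | none => if w = τ s.2 then none else some (G.owner s.2)
    | some j => some j, w)

/-- The memory state after a history. -/
noncomputable def memState (τ : V → V) (h : List V) : Option P × V :=
  h.tail.foldl (G.memStep τ) (none, G.v0)

/-- The move prescribed in a memory state. -/
def memMove (τ : V → V) (pun : P → V → V) (s : Option P × V) : V :=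
  match s.1 with
  | none => τ s.2
  | some j => pun j s.2

theorem lastV_snoc (h : List V) (w : V) : G.lastV (h ++ [w]) = w := by
  simp [lastV]

theorem memState_append (τ : V → V) (h δ : List V) (hne : h ≠ []) :
    G.memState τ (h ++ δ) = δ.foldl (G.memStep τ) (G.memState τ h) := by
  unfold memState
  rw [List.tail_append_of_ne_nil hne, List.foldl_append]

theorem memState_snd (τ : V → V) (h : List V) (hh : G.IsHistory h) :
    (G.memState τ h).2 = G.lastV h := by
  obtain ⟨hne, hhead, -⟩ := hh
  rcases List.eq_nil_or_concat h with rfl | ⟨t, w, rfl⟩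
  · exact absurd rfl hne
  · rw [List.concat_eq_append] at *
    rw [lastV_snoc]
    by_cases ht : t = []
    · subst ht; simpa [memState] using hhead.symm
    · rw [memState_append _ _ _ _ ht]; rfl

theorem outHist_isHistory (prof : P → List V → V) (hp : G.IsProfile prof) (n : ℕ) :
    G.IsHistory (G.outHist prof n) := by
  induction n with
  | zero => exact ⟨by simp [outHist], by simp [outHist], List.isChain_singleton _⟩
  | succ n ih =>
    have hE := hp _ _ ih rfl
    obtain ⟨h1, h2, h3⟩ := ih
    refine ⟨by simp [outHist], ?_, ?_⟩
    · rw [outHist, List.head?_append_of_ne_nil _ h1]; exact h2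
    · rw [outHist]
      refine List.IsChain.append h3 (List.isChain_singleton _) ?_
      intro x hx y hy
      simp only [List.head?_cons, Option.mem_def, Option.some.injEq] at hy
      subst hy
      have : G.lastV (G.outHist prof n) = x := by
        rw [lastV, List.getLastD_eq_getLast?, hx]; rfl
      rw [this] at hE
      rwa [this]

theorem memState_outHist_succ (τ : V → V) (prof : P → List V → V) (hp : G.IsProfile prof)
    (n : ℕ) : G.memState τ (G.outHist prof (n + 1)) =
      G.memStep τ (G.memState τ (G.outHist prof n)) (G.outcome prof (n + 1)) := by
  have h1 := (G.outHist_isHistory prof hp n).1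
  rw [outcome, outHist, lastV_snoc, memState_append _ _ _ _ h1]; rfl

theorem outcome_succ (prof : P → List V → V) (n : ℕ) : G.outcome prof (n + 1) =
    prof (G.owner (G.outcome prof n)) (G.outHist prof n) := by
  rw [outcome, outHist, lastV_snoc]; rfl

theorem finiteMemory_mem [Finite P] [Finite V] (τ : V → V) (pun : P → V → V) (i : P) :
    G.FiniteMemory i (fun h => memMove τ pun (G.memState τ h)) := by
  classical
  have := Fintype.ofFinite P
  have := Fintype.ofFinite V
  let rep : Option P × V → List V := fun s =>
    if hs : ∃ h, G.IsHistory h ∧ G.memState τ h = s then hs.choose else []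
  refine ⟨Finset.univ.image rep, fun h hh => ?_⟩
  have hs : ∃ h', G.IsHistory h' ∧ G.memState τ h' = G.memState τ h := ⟨h, hh, rfl⟩
  have hr : rep (G.memState τ h) = hs.choose := dif_pos hs
  refine ⟨rep (G.memState τ h), Finset.mem_image_of_mem _ (Finset.mem_univ _), ?_, ?_⟩
  · rw [hr]; exact hs.choose_spec.1
  · rw [hr]
    intro δ _ _ _ _
    dsimp only
    rw [memState_append _ _ _ _ hh.1, memState_append _ _ _ _ hs.choose_spec.1.1,
      hs.choose_spec.2]

end Aux

end ReachGame

/-- Every quantitative multiplayer reachability game has a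
finite-memory Nash equilibrium. -/
theorem exists_finiteMemory_nash {P V : Type} [Fintype P] [DecidableEq P] [Fintype V]
    (G : ReachGame P V) :
    ∃ prof : P → List V → V,
      G.IsProfile prof ∧ G.FiniteMemoryProfile prof ∧ G.IsNash prof := by
  classical
  choose f hf0 hfmin hfle hfge hfmax using G.exists_bellman
  -- the main positional strategy
  have hτ : ∀ v, ∃ w, G.E v w ∧
      (v ∉ G.goal (G.owner v) → f (G.owner v) w + 1 ≤ f (G.owner v) v) :=
    fun v => hfmin (G.owner v) v rfl
  choose τ hτE hτ using hτ
  -- punishing strategies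
  have hpun : ∀ j v, ∃ w, G.E v w ∧ f j v ≤ f j w + 1 := by
    intro j v
    by_cases h : G.owner v = j
    · obtain ⟨w, hw⟩ := G.total v
      exact ⟨w, hw, hfle j v w h hw⟩
    · exact hfmax j v h
  choose pun hpunE hpun using hpun
  have hτ' : ∀ j v, v ∉ G.goal j → f j (τ v) + 1 ≤ f j v := by
    intro j v hg
    by_cases h : G.owner v = j
    · subst h; exact hτ v hg
    · exact hfge j v _ hg h (hτE v)
  let prof : P → List V → V := fun _ h => ReachGame.memMove τ pun (G.memState τ h)
  have hprof : G.IsProfile prof := by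
    intro i h hh _
    have hl := G.memState_snd τ h hh
    rw [← hl]
    change G.E _ (ReachGame.memMove τ pun (G.memState τ h))
    unfold ReachGame.memMove
    split
    · exact hτE _
    · exact hpunE _ _
  refine ⟨prof, hprof, fun i => G.finiteMemory_mem τ pun i, ?_⟩
  have hsnd : ∀ (p : P → List V → V), G.IsProfile p → ∀ n,
      (G.memState τ (G.outHist p n)).2 = G.outcome p n := fun p hp n =>
    G.memState_snd τ _ (G.outHist_isHistory p hp n)
  -- the main play
  have hmain : ∀ n, (G.memState τ (G.outHist prof n)).1 = none ∧
      G.outcome prof n = τ^[n] G.v0 := by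
    intro n
    induction n with
    | zero => exact ⟨rfl, rfl⟩
    | succ n ih =>
      have h2 : G.outcome prof (n + 1) = τ (G.outcome prof n) := by
        rw [G.outcome_succ]
        change ReachGame.memMove τ pun _ = _
        rw [ReachGame.memMove, ih.1, hsnd prof hprof]
      constructor
      · rw [G.memState_outHist_succ τ prof hprof, h2, ReachGame.memStep, ih.1,
          hsnd prof hprof]
        simp
      · rw [h2, ih.2, Function.iterate_succ_apply']
  intro j σ' hσ'
  set prof' := Function.update prof j σ' with hprof'_def
  have hprof' : G.IsProfile prof' := by
    intro i
    by_cases h : i = j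
    · subst h; simpa [prof'] using hσ'
    · simpa [prof', h] using hprof i
  -- reduce to hitting times
  suffices key : ∀ l, G.outcome prof' l ∈ G.goal j → ∃ m ≤ l, G.outcome prof m ∈ G.goal j by
    refine le_sInf ?_
    rintro _ ⟨l, rfl, hl⟩
    obtain ⟨m, hm, hg⟩ := key l hl
    have h1 : G.cost j (G.outcome prof) ≤ (m : ℕ∞) := sInf_le ⟨m, rfl, hg⟩
    exact h1.trans (by exact_mod_cast hm)
  intro l hl
  by_contra hcon
  push Not at hcon
  -- values along the main play
  have hval : ∀ k n, n + k = l → ((k : ℕ∞) + 1) ≤ f j (τ^[n] G.v0) := by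
    intro k
    induction k with
    | zero =>
      intro n hn
      have := hτ' j _ (hcon n (by omega))
      rw [(hmain n).2] at this
      refine le_trans ?_ this
      simp
    | succ k ih =>
      intro n hn
      have := hτ' j _ (hcon n (by omega))
      rw [(hmain n).2] at this
      refine le_trans ?_ this
      have h2 := ih (n + 1) (by omega)
      rw [Function.iterate_succ_apply'] at h2
      push_cast
      gcongr
  have hinv : ∀ n k, n + k = l →
      (((G.memState τ (G.outHist prof' n)).1 = none ∧ G.outcome prof' n = τ^[n] G.v0) ∨
        (G.memState τ (G.outHist prof' n)).1 = some j) ∧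
      ((k : ℕ∞) + 1) ≤ f j (G.outcome prof' n) := by
    intro n
    induction n with
    | zero => exact fun k hk => ⟨Or.inl ⟨rfl, rfl⟩, hval k 0 hk⟩
    | succ n ih =>
      intro k hk
      obtain ⟨hcase, hfn⟩ := ih (k + 1) (by omega)
      have hst := G.memState_outHist_succ τ prof' hprof' n
      have hs2 := hsnd prof' hprof' n
      have hE : G.E (G.outcome prof' n) (G.outcome prof' (n + 1)) := by
        rw [G.outcome_succ]
        exact hprof' _ _ (G.outHist_isHistory prof' hprof' n) rfl
      have hother : G.owner (G.outcome prof' n) ≠ j → G.outcome prof' (n + 1) =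
          ReachGame.memMove τ pun (G.memState τ (G.outHist prof' n)) := by
        intro ho
        rw [G.outcome_succ, hprof'_def, Function.update_of_ne ho]
      have hdrop : f j (G.outcome prof' n) ≤ f j (G.outcome prof' (n + 1)) + 1 →
          ((k : ℕ∞) + 1) ≤ f j (G.outcome prof' (n + 1)) := by
        intro h
        have h2 := hfn.trans h
        push_cast at h2
        exact (ENat.add_le_add_iff_right ENat.one_ne_top).1 h2
      rcases hcase with ⟨hnone, heq⟩ | hsome
      · by_cases hdev : G.outcome prof' (n + 1) = τ (G.outcome prof' n)
        · have h2 : G.outcome prof' (n + 1) = τ^[n + 1] G.v0 := by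
            rw [hdev, heq, Function.iterate_succ_apply']
          refine ⟨Or.inl ⟨?_, h2⟩, ?_⟩
          · rw [hst, ReachGame.memStep, hnone, hs2]
            simp [hdev]
          · rw [h2]; exact hval k (n + 1) hk
        · have ho : G.owner (G.outcome prof' n) = j := by
            by_contra ho
            apply hdev
            rw [hother ho, ReachGame.memMove, hnone, hs2]
          refine ⟨Or.inr ?_, hdrop (hfle j _ _ ho hE)⟩
          rw [hst, ReachGame.memStep, hnone, hs2]
          simp [hdev, ho]
      · refine ⟨Or.inr ?_, hdrop ?_⟩
        · rw [hst, ReachGame.memStep, hsome]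
        · by_cases ho : G.owner (G.outcome prof' n) = j
          · exact hfle j _ _ ho hE
          · rw [hother ho, ReachGame.memMove, hsome, hs2]
            exact hpun _ _
  have hfin := (hinv l 0 (by omega)).2
  rw [hf0 j _ hl] at hfin
  simp at hfin
end

section
/- For every quantitative two-player reachability game G and every depth d ≥ 0, the truncated game G^d played on the tree of histories of G of length at most d has a secure equilibrium. -/
/-- `(x₁,x₂) ≺₁ (y₁,y₂)` iff `x₁ > y₁`, or `x₁ = y₁` and `x₂ < y₂` :
player 1 prefers the cost profile `y` to `x`. -/
def prec1 (x y : ℕ∞ × ℕ∞) : Prop := y.1 < x.1 ∨ (x.1 = y.1 ∧ x.2 < y.2)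

/-- `(x₁,x₂) ≺₂ (y₁,y₂)` iff `x₂ > y₂`, or `x₂ = y₂` and `x₁ < y₁` :
player 2 prefers the cost profile `y` to `x`. -/
def prec2 (x y : ℕ∞ × ℕ∞) : Prop := y.2 < x.2 ∨ (x.2 = y.2 ∧ x.1 < y.1)

namespace ReachGame

variable {V : Type} (G : ReachGame (Fin 2) V)

/-- The pair of costs of the two players for the play `ρ`. -/
noncomputable def costPair (ρ : ℕ → V) : ℕ∞ × ℕ∞ := (G.cost 0 ρ, G.cost 1 ρ)

/-- Secure equilibrium: no player `j` has a `≺ⱼ`-profitable deviation. -/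
def IsSecure (prof : Fin 2 → List V → V) : Prop :=
  (∀ σ' : List V → V, G.IsStrategy 0 σ' →
    ¬ prec1 (G.costPair (G.outcome prof))
        (G.costPair (G.outcome (Function.update prof 0 σ')))) ∧
  (∀ σ' : List V → V, G.IsStrategy 1 σ' →
    ¬ prec2 (G.costPair (G.outcome prof))
        (G.costPair (G.outcome (Function.update prof 1 σ'))))

/-- The pair of costs of the two players for a finite play `h`. -/
noncomputable def costListPair (h : List V) : ℕ∞ × ℕ∞ := (G.costList 0 h, G.costList 1 h)

/-- Secure equilibrium of the truncated game `G^d`. -/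
def IsSecureTrunc (d : ℕ) (prof : Fin 2 → List V → V) : Prop :=
  (∀ σ' : List V → V, G.IsStrategyTrunc d 0 σ' →
    ¬ prec1 (G.costListPair (G.outHist prof d))
        (G.costListPair (G.outHist (Function.update prof 0 σ') d))) ∧
  (∀ σ' : List V → V, G.IsStrategyTrunc d 1 σ' →
    ¬ prec2 (G.costListPair (G.outHist prof d))
        (G.costListPair (G.outHist (Function.update prof 1 σ') d)))

end ReachGame


namespace ReachGame

/-- The preference relation of player `j`. -/
def prf (j : Fin 2) (x y : ℕ∞ × ℕ∞) : Prop := if j = 0 then prec1 x y else prec2 x y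

theorem prf_irrefl (j : Fin 2) (x : ℕ∞ × ℕ∞) : ¬ prf j x x := by
  unfold prf prec1 prec2; split_ifs <;> simp

theorem prf_trans (j : Fin 2) {x y z : ℕ∞ × ℕ∞} (h : prf j x y) (h' : prf j y z) :
    prf j x z := by
  unfold prf prec1 prec2 at *; split_ifs at * <;> grind

theorem prf_neg_trans (j : Fin 2) {x y z : ℕ∞ × ℕ∞} (h : ¬ prf j x y) (h' : ¬ prf j y z) :
    ¬ prf j x z := by
  unfold prf prec1 prec2 at *; split_ifs at * <;> grind

theorem exists_best {V : Type} [Finite V] (G : ReachGame (Fin 2) V) (j : Fin 2)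
    (v : V) (f : V → ℕ∞ × ℕ∞) :
    ∃ w, G.E v w ∧ ∀ w', G.E v w' → ¬ prf j (f w) (f w') := by
  have wf : WellFounded (fun a b : V => prf j (f b) (f a)) :=
    @Finite.wellFounded_of_trans_of_irrefl V _ _ ⟨fun a b c h h' => prf_trans j h' h⟩
      ⟨fun a => prf_irrefl j _⟩
  obtain ⟨w, hw, hm⟩ := wf.has_min {w | G.E v w} (G.total v)
  exact ⟨w, hw, fun w' hw' => hm w' hw'⟩

/-- The final history reached by backward induction from `h` with `n` remaining steps. -/
noncomputable def bres {V : Type} [Finite V] (G : ReachGame (Fin 2) V) : ℕ → List V → List V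
  | 0, h => h
  | n + 1, h => bres G n (h ++ [Classical.choose (G.exists_best (G.owner (G.lastV h)) (G.lastV h)
      (fun w => G.costListPair (bres G n (h ++ [w]))))])

/-- The backward induction choice at `h` when `n` steps remain after it. -/
noncomputable def bchoice {V : Type} [Finite V] (G : ReachGame (Fin 2) V) (n : ℕ)
    (h : List V) : V :=
  Classical.choose (G.exists_best (G.owner (G.lastV h)) (G.lastV h)
      (fun w => G.costListPair (G.bres n (h ++ [w]))))

section
variable {V : Type} [Finite V] (G : ReachGame (Fin 2) V)

theorem bres_succ (n : ℕ) (h : List V) :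
    G.bres (n + 1) h = G.bres n (h ++ [G.bchoice n h]) := rfl

theorem bchoice_edge (n : ℕ) (h : List V) : G.E (G.lastV h) (G.bchoice n h) :=
  (Classical.choose_spec (G.exists_best (G.owner (G.lastV h)) (G.lastV h)
      (fun w => G.costListPair (G.bres n (h ++ [w]))))).1

theorem bchoice_best (n : ℕ) (h : List V) (w : V) (hw : G.E (G.lastV h) w) :
    ¬ prf (G.owner (G.lastV h)) (G.costListPair (G.bres (n + 1) h))
      (G.costListPair (G.bres n (h ++ [w]))) :=
  (Classical.choose_spec (G.exists_best (G.owner (G.lastV h)) (G.lastV h)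
      (fun w => G.costListPair (G.bres n (h ++ [w]))))).2 w hw

/-- The backward induction profile. -/
noncomputable def bprof (d : ℕ) : Fin 2 → List V → V := fun _ h => G.bchoice (d - h.length) h

theorem bprof_out (d k : ℕ) (hk : k ≤ d) :
    (G.outHist (G.bprof d) k).length = k + 1 ∧
    G.bres (d - k) (G.outHist (G.bprof d) k) = G.bres d [G.v0] := by
  induction k with
  | zero => simp [outHist]
  | succ k ih =>
    obtain ⟨h1, h2⟩ := ih (by omega)
    refine ⟨by simp [outHist, h1], ?_⟩
    rw [← h2, show d - k = (d - (k + 1)) + 1 by omega, bres_succ]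
    simp [outHist, bprof, h1]

theorem isHistory_snoc {h : List V} {w : V} (hh : G.IsHistory h) (hw : G.E (G.lastV h) w) :
    G.IsHistory (h ++ [w]) := by
  obtain ⟨h1, h2, h3⟩ := hh
  refine ⟨by simp, by simp [List.head?_append, h2], ?_⟩
  refine List.isChain_append.2 ⟨h3, List.isChain_singleton _, ?_⟩
  intro x hx y hy
  simp only [List.head?_cons, Option.mem_def, Option.some.injEq] at hy
  subst hy
  have : G.lastV h = x := by
    unfold lastV
    rw [List.getLastD_eq_getLast?, Option.mem_def.1 hx]; rfl
  rwa [← this]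

theorem dev_out (d : ℕ) (j : Fin 2) (σ : List V → V) (hσ : G.IsStrategyTrunc d j σ)
    (k : ℕ) (hk : k ≤ d) :
    G.IsHistory (G.outHist (Function.update (G.bprof d) j σ) k) ∧
    (G.outHist (Function.update (G.bprof d) j σ) k).length = k + 1 ∧
    ¬ prf j (G.costListPair (G.bres d [G.v0])) (G.costListPair
      (G.bres (d - k) (G.outHist (Function.update (G.bprof d) j σ) k))) := by
  induction k with
  | zero =>
    refine ⟨⟨by simp [outHist], by simp [outHist], List.isChain_singleton _⟩,
      by simp [outHist], prf_irrefl _ _⟩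
  | succ k ih =>
    obtain ⟨h1, h2, h3⟩ := ih (by omega)
    rw [outHist]
    generalize G.outHist (Function.update (G.bprof d) j σ) k = h at *
    rw [show d - k = (d - (k + 1)) + 1 by omega] at h3
    by_cases ho : G.owner (G.lastV h) = j
    · have hE := hσ h h1 (by omega) ho
      rw [ho, Function.update_self]
      refine ⟨G.isHistory_snoc h1 hE, by simp [h2], prf_neg_trans j h3 ?_⟩
      have := G.bchoice_best (d - (k + 1)) h _ hE
      rwa [ho] at this
    · rw [Function.update_of_ne ho]
      refine ⟨G.isHistory_snoc h1 (G.bchoice_edge _ _), by simp [h2], ?_⟩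
      rw [bres_succ] at h3
      simpa [bprof, h2] using h3

end

end ReachGame

/-- For every quantitative two-player reachability game `G` and
every depth `d ≥ 0`, the truncated game `G^d` has a secure equilibrium. -/
theorem trunc_secure_exists {V : Type} [Fintype V]
    (G : ReachGame (Fin 2) V) (d : ℕ) :
    ∃ prof : Fin 2 → List V → V,
      G.IsProfileTrunc d prof ∧ G.IsSecureTrunc d prof := by
  have h0 := (G.bprof_out d d le_rfl).2
  rw [Nat.sub_self, ReachGame.bres] at h0
  refine ⟨G.bprof d, fun i h _ _ _ => G.bchoice_edge _ _, fun σ hσ => ?_, fun σ hσ => ?_⟩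
  · have := (G.dev_out d 0 σ hσ d le_rfl).2.2
    rw [Nat.sub_self, ReachGame.bres, ← h0] at this
    simpa [ReachGame.prf] using this
  · have := (G.dev_out d 1 σ hσ d le_rfl).2.2
    rw [Nat.sub_self, ReachGame.bres, ← h0] at this
    simpa [ReachGame.prf] using this
end

section
/- Let G be a quantitative two-player reachability game. If there exists a secure equilibrium of a certain type in G, then there exists a depth d ≥ (|Π|+1)·2·|V| and a secure equilibrium of the same type in the truncated game G^d. -/
namespace ReachGame

theorem length_outHist {V : Type} (G : ReachGame (Fin 2) V) (p : Fin 2 → List V → V) (n : ℕ) :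
    (G.outHist p n).length = n + 1 := by
  induction n with
  | zero => rfl
  | succ n ih => simp [outHist, ih]

theorem getD_outHist {V : Type} (G : ReachGame (Fin 2) V) (p : Fin 2 → List V → V) (n l : ℕ)
    (h : l ≤ n) : (G.outHist p n).getD l G.v0 = G.outcome p l := by
  induction n with
  | zero =>
    obtain rfl : l = 0 := by omega
    rfl
  | succ n ih =>
    rcases Nat.lt_or_ge n l with h1 | h1
    · obtain rfl : l = n + 1 := by omega
      have hl := length_outHist G p n
      simp [outcome, lastV, outHist, hl]
    · rw [← ih h1]
      have hl := length_outHist G p n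
      rw [outHist, List.getD_append _ _ _ _ (by omega)]

/-- The truncated cost agrees with the cost, or is infinite while the cost exceeds `d`. -/
theorem costList_cases {V : Type} (G : ReachGame (Fin 2) V) (p : Fin 2 → List V → V) (d : ℕ)
    (i : Fin 2) :
    G.costList i (G.outHist p d) = G.cost i (G.outcome p) ∨
      (G.costList i (G.outHist p d) = ⊤ ∧ (d : ℕ∞) < G.cost i (G.outcome p)) := by
  have hle : G.cost i (G.outcome p) ≤ G.costList i (G.outHist p d) := by
    refine sInf_le_sInf ?_
    rintro n ⟨l, rfl, hl, hg⟩
    rw [length_outHist] at hl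
    rw [getD_outHist G p d l (by omega)] at hg
    exact ⟨l, rfl, hg⟩
  by_cases hc : G.cost i (G.outcome p) ≤ d
  · left
    refine le_antisymm ?_ hle
    have hne : {n : ℕ∞ | ∃ l : ℕ, n = (l : ℕ∞) ∧ G.outcome p l ∈ G.goal i}.Nonempty := by
      rw [Set.nonempty_iff_ne_empty]
      intro he
      rw [cost, he] at hc
      simp at hc
    obtain ⟨l, hl, hg⟩ := csInf_mem hne
    change G.cost i (G.outcome p) = l at hl
    rw [hl] at hc ⊢
    have hld : l ≤ d := by exact_mod_cast hc
    refine sInf_le ⟨l, rfl, ?_, ?_⟩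
    · rw [length_outHist]; omega
    · rw [getD_outHist G p d l hld]; exact hg
  · right
    refine ⟨?_, not_le.mp hc⟩
    rw [costList, sInf_eq_top]
    rintro n ⟨l, rfl, hl, hg⟩
    exfalso
    rw [length_outHist] at hl
    rw [getD_outHist G p d l (by omega)] at hg
    apply hc
    calc G.cost i (G.outcome p) ≤ (l : ℕ∞) := sInf_le ⟨l, rfl, hg⟩
      _ ≤ d := by exact_mod_cast (by omega : l ≤ d)

/-- A truncated deviation extends to a deviation in the full game. -/
theorem exists_extension {V : Type} (G : ReachGame (Fin 2) V) (p : Fin 2 → List V → V)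
    (hp : G.IsProfile p) (d : ℕ) (j : Fin 2) (s : List V → V) (hs : G.IsStrategyTrunc d j s) :
    ∃ s' : List V → V, G.IsStrategy j s' ∧
      G.outHist (Function.update p j s') d = G.outHist (Function.update p j s) d := by
  refine ⟨fun h => if h.length ≤ d then s h else p j h, ?_, ?_⟩
  · intro h hh ho
    by_cases hd : h.length ≤ d
    · simpa [hd] using hs h hh hd ho
    · simpa [hd] using hp j h hh ho
  · suffices H : ∀ n ≤ d, G.outHist (Function.update p j
        (fun h => if h.length ≤ d then s h else p j h)) n =
        G.outHist (Function.update p j s) n from H d le_rfl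
    intro n
    induction n with
    | zero => intro _; rfl
    | succ n ih =>
      intro hn
      have hl := length_outHist G (Function.update p j s) n
      rw [outHist, outHist, ih (by omega)]
      congr 2
      by_cases ho : G.owner (G.lastV (G.outHist (Function.update p j s) n)) = j
      · rw [ho, Function.update_self, Function.update_self, if_pos (by omega)]
      · rw [Function.update_of_ne ho, Function.update_of_ne ho]

end ReachGame

theorem prec_transfer (d : ℕ) (x1 x2 y1 y2 t1 t2 : ℕ∞)
    (hx2 : x2 = ⊤ ∨ x2 ≤ d)
    (h1 : t1 = y1 ∨ (t1 = ⊤ ∧ (d : ℕ∞) < y1)) (h2 : t2 = y2 ∨ (t2 = ⊤ ∧ (d : ℕ∞) < y2))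
    (h : t1 < x1 ∨ (x1 = t1 ∧ x2 < t2)) : y1 < x1 ∨ (x1 = y1 ∧ x2 < y2) := by
  have h1' : y1 ≤ t1 := by
    rcases h1 with h1 | ⟨h1, _⟩
    · exact h1.ge
    · rw [h1]; exact le_top
  rcases h with h | ⟨he, hlt⟩
  · exact Or.inl (h1'.trans_lt h)
  · have hy2 : x2 < y2 := by
      rcases h2 with h2 | ⟨_, h2⟩
      · rwa [← h2]
      · rcases hx2 with hx2 | hx2
        · rw [hx2] at hlt; exact absurd hlt not_top_lt
        · exact hx2.trans_lt h2
    rcases lt_or_eq_of_le h1' with h | h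
    · exact Or.inl (he ▸ h)
    · exact Or.inr ⟨he.trans h.symm, hy2⟩

/-- If a quantitative two-player reachability game `G` has a secure
equilibrium of a certain type, then there exist a depth `d ≥ (|Π|+1)·2·|V|` and a
secure equilibrium of the same type in the truncated game `G^d`. -/
theorem secure_to_trunc_secure {V : Type} [Fintype V]
    (G : ReachGame (Fin 2) V)
    (prof : Fin 2 → List V → V) (hprof : G.IsProfile prof) (hsec : G.IsSecure prof) :
    ∃ d : ℕ, (Fintype.card (Fin 2) + 1) * 2 * Fintype.card V ≤ d ∧
      ∃ τ : Fin 2 → List V → V,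
        G.IsProfileTrunc d τ ∧ G.IsSecureTrunc d τ ∧
        G.typeOfTrunc d τ = G.typeOf prof := by
  have key : ∀ i : Fin 2, ∃ c : ℕ, ∀ d : ℕ, c ≤ d →
      (G.cost i (G.outcome prof) = ⊤ ∨ G.cost i (G.outcome prof) ≤ d) := by
    intro i
    by_cases h : G.cost i (G.outcome prof) = ⊤
    · exact ⟨0, fun _ _ => Or.inl h⟩
    · obtain ⟨c, hc⟩ := ENat.ne_top_iff_exists.mp h
      exact ⟨c, fun d hd => Or.inr (by rw [← hc]; exact_mod_cast hd)⟩
  choose c hc using key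
  obtain ⟨d, hd, hd0, hd1⟩ : ∃ d : ℕ, (Fintype.card (Fin 2) + 1) * 2 * Fintype.card V ≤ d ∧
      c 0 ≤ d ∧ c 1 ≤ d :=
    ⟨(Fintype.card (Fin 2) + 1) * 2 * Fintype.card V + c 0 + c 1, by omega, by omega, by omega⟩
  have hcd : ∀ i : Fin 2, G.cost i (G.outcome prof) = ⊤ ∨ G.cost i (G.outcome prof) ≤ d := by
    intro i
    fin_cases i
    · exact hc 0 d hd0
    · exact hc 1 d hd1
  have heq : ∀ i : Fin 2, G.costList i (G.outHist prof d) = G.cost i (G.outcome prof) := by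
    intro i
    rcases G.costList_cases prof d i with h | ⟨h, h'⟩
    · exact h
    · rcases hcd i with h2 | h2
      · rw [h, h2]
      · exact absurd h' (not_lt.mpr h2)
  refine ⟨d, hd, prof, fun i h hh _ ho => hprof i h hh ho, ⟨?_, ?_⟩, ?_⟩
  · intro s hs hprec
    obtain ⟨s', hs', ho⟩ := G.exists_extension prof hprof d 0 s hs
    apply hsec.1 s' hs'
    simp only [prec1, ReachGame.costListPair, ← ho, heq] at hprec
    exact prec_transfer d _ _ _ _ _ _ (hcd 1) (G.costList_cases _ d 0)
      (G.costList_cases _ d 1) hprec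
  · intro s hs hprec
    obtain ⟨s', hs', ho⟩ := G.exists_extension prof hprof d 1 s hs
    apply hsec.2 s' hs'
    simp only [prec2, ReachGame.costListPair, ← ho, heq] at hprec
    exact prec_transfer d _ _ _ _ _ _ (hcd 0) (G.costList_cases _ d 1)
      (G.costList_cases _ d 0) hprec
  · ext i
    constructor
    · rintro ⟨v, hv, hg⟩
      obtain ⟨l, hl, rfl⟩ := List.mem_iff_getElem.mp hv
      refine ⟨l, ?_⟩
      have hl' := hl
      rw [ReachGame.length_outHist] at hl'
      rw [← G.getD_outHist prof d l (by omega), List.getD_eq_getElem _ _ hl]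
      exact hg
    · rintro ⟨l, hg⟩
      by_contra hn
      have htop : G.costList i (G.outHist prof d) = ⊤ := by
        rw [ReachGame.costList, sInf_eq_top]
        rintro n ⟨k, rfl, hk, hkg⟩
        exfalso
        rw [List.getD_eq_getElem _ _ hk] at hkg
        exact hn ⟨_, List.getElem_mem hk, hkg⟩
      have : G.cost i (G.outcome prof) ≤ (l : ℕ∞) := sInf_le ⟨l, rfl, hg⟩
      rw [← heq, htop] at this
      simp at this
end
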